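/- Let (V*, h*) be a 4-dimensional Minkowski space of signature (3,1) with Kähler-Atiyah algebra (∧V*, ⋄). A polyform α ∈ ∧V* satisfies (π∘τ)(α) = -α, α ⋄ α = 0, α ⋄ u ⋄ α = 0 where u = α⁽¹⁾, and α ⋄ v ⋄ α = 4 (v ⋄ α)⁽⁰⁾ α for all v ∈ V* if and only if α = u + u ∧ l where (u, l) is a parabolic pair of one-forms: h*(u,u) = 0, h*(l,l) = 1, h*(u,l) = 0 and u ≠ 0, or α = 0. -/

import Mathlib

noncomputable section

instance : Invertible (2 : ℝ) := invertibleOfNonzero two_ne_zero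

/-- The Minkowski bilinear form of "mostly plus" signature (3,1) on `ℝ⁴`. -/
def minkB : (Fin 4 → ℝ) →ₗ[ℝ] (Fin 4 → ℝ) →ₗ[ℝ] ℝ :=
  LinearMap.mk₂ ℝ (fun x y => x 0 * y 0 + x 1 * y 1 + x 2 * y 2 - x 3 * y 3)
    (by intro m₁ m₂ n; simp only [Pi.add_apply]; ring)
    (by intro c m n; simp only [Pi.smul_apply, smul_eq_mul]; ring)
    (by intro m n₁ n₂; simp only [Pi.add_apply]; ring)
    (by intro c m n; simp only [Pi.smul_apply, smul_eq_mul]; ring)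

/-- The Minkowski quadratic form `Q(θ) = h*(θ,θ)` of signature (3,1), so that the
Clifford relation is `θ ⋄ θ = h*(θ,θ)`. -/
def Qmink : QuadraticForm ℝ (Fin 4 → ℝ) := LinearMap.BilinMap.toQuadraticMap minkB

/-- The Kähler–Atiyah algebra `(∧V*, ⋄)` is modelled by the Clifford algebra of
`Qmink`; this is the symbol isomorphism identifying it with the exterior algebra
as a vector space. -/
def cliffToExt : CliffordAlgebra Qmink ≃ₗ[ℝ] ExteriorAlgebra ℝ (Fin 4 → ℝ) :=
  CliffordAlgebra.equivExterior Qmink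

/-- The degree-`k` component `α⁽ᵏ⁾` of a polyform. -/
def polyProj (k : ℕ) (x : CliffordAlgebra Qmink) : ExteriorAlgebra ℝ (Fin 4 → ℝ) :=
  ↑(DirectSum.decompose (fun i : ℕ => ⋀[ℝ]^i (Fin 4 → ℝ)) (cliffToExt x) k)

/-- The scalar part `α⁽⁰⁾` of a polyform, as a real number. -/
def scalarPart (x : CliffordAlgebra Qmink) : ℝ :=
  ExteriorAlgebra.algebraMapInv (cliffToExt x)


open CliffordAlgebra

/-- basis vectors -/
def ee (i : Fin 4) : CliffordAlgebra Qmink := ι Qmink (Pi.single i 1)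

theorem Qmink_apply (v : Fin 4 → ℝ) : Qmink v = minkB v v := rfl

theorem minkB_apply (x y : Fin 4 → ℝ) :
    minkB x y = x 0 * y 0 + x 1 * y 1 + x 2 * y 2 - x 3 * y 3 := rfl

theorem polar_mink (x y : Fin 4 → ℝ) : QuadraticMap.polar Qmink x y = 2 * minkB x y := by
  simp only [QuadraticMap.polar, Qmink_apply, minkB_apply, Pi.add_apply]; ring

theorem mul_swap (x y : Fin 4 → ℝ) :
    ι Qmink x * ι Qmink y = algebraMap ℝ _ (2 * minkB x y) - ι Qmink y * ι Qmink x := by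
  rw [← polar_mink, ← ι_mul_ι_add_swap]; abel

theorem ee_swap (i j : Fin 4) (h : j < i) : ee i * ee j = - (ee j * ee i) := by
  unfold ee
  rw [mul_swap]
  have : minkB (Pi.single i 1) (Pi.single j 1) = 0 := by
    rw [minkB_apply]; fin_cases i <;> fin_cases j <;> simp at h ⊢
  rw [this]; simp

theorem ee_swap' (i j : Fin 4) (h : j < i) (x : CliffordAlgebra Qmink) :
    ee i * (ee j * x) = - (ee j * (ee i * x)) := by
  rw [← mul_assoc, ee_swap i j h]; simp [mul_assoc]

theorem ee_sq (i : Fin 4) : ee i * ee i = if i = 3 then -1 else 1 := by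
  unfold ee
  rw [ι_sq_scalar, Qmink_apply, minkB_apply]
  fin_cases i <;> simp

theorem ee_sq' (i : Fin 4) (x : CliffordAlgebra Qmink) :
    ee i * (ee i * x) = if i = 3 then -x else x := by
  rw [← mul_assoc, ee_sq]; split_ifs <;> simp

theorem ι_eq (v : Fin 4 → ℝ) :
    ι Qmink v = v 0 • ee 0 + v 1 • ee 1 + v 2 • ee 2 + v 3 • ee 3 := by
  unfold ee
  rw [← map_smul, ← map_smul, ← map_smul, ← map_smul, ← map_add, ← map_add, ← map_add]
  congr 1
  ext i; fin_cases i <;> simp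

/-- sixteen products -/
def basisSet : Set (CliffordAlgebra Qmink) :=
  {1, ee 0, ee 1, ee 2, ee 3, ee 0 * ee 1, ee 0 * ee 2, ee 0 * ee 3, ee 1 * ee 2, ee 1 * ee 3,
    ee 2 * ee 3, ee 0 * (ee 1 * ee 2), ee 0 * (ee 1 * ee 3), ee 0 * (ee 2 * ee 3),
    ee 1 * (ee 2 * ee 3), ee 0 * (ee 1 * (ee 2 * ee 3))}

set_option maxHeartbeats 4000000 in
theorem ee_mul_basis (i : Fin 4) (x) (hx : x ∈ basisSet) :
    ee i * x ∈ basisSet ∨ -(ee i * x) ∈ basisSet := by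
  have s10 := ee_swap 1 0 (by decide)
  have s20 := ee_swap 2 0 (by decide)
  have s30 := ee_swap 3 0 (by decide)
  have s21 := ee_swap 2 1 (by decide)
  have s31 := ee_swap 3 1 (by decide)
  have s32 := ee_swap 3 2 (by decide)
  have t10 := ee_swap' 1 0 (by decide)
  have t20 := ee_swap' 2 0 (by decide)
  have t30 := ee_swap' 3 0 (by decide)
  have t21 := ee_swap' 2 1 (by decide)
  have t31 := ee_swap' 3 1 (by decide)
  have t32 := ee_swap' 3 2 (by decide)
  rcases hx with rfl | rfl | rfl | rfl | rfl | rfl | rfl | rfl | rfl | rfl | rfl | rfl | rfl | rfl | rfl | rfl <;>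
  fin_cases i <;>
  simp [s10, s20, s30, s21, s31, s32, t10, t20, t30, t21, t31, t32, ee_sq, ee_sq', basisSet]

theorem mem_span_basis (x : CliffordAlgebra Qmink) : x ∈ Submodule.span ℝ basisSet := by
  have key : ∀ i, ∀ x ∈ Submodule.span ℝ basisSet, ee i * x ∈ Submodule.span ℝ basisSet := by
    intro i x hx
    induction hx using Submodule.span_induction with
    | mem x h =>
      rcases ee_mul_basis i x h with h | h
      · exact Submodule.subset_span h
      · rw [← neg_mem_iff]; exact Submodule.subset_span h
    | zero => simp
    | add x y _ _ hx hy => rw [mul_add]; exact add_mem hx hy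
    | smul a x _ hx => rw [mul_smul_comm]; exact Submodule.smul_mem _ _ hx
  induction x using CliffordAlgebra.left_induction with
  | algebraMap r =>
    rw [Algebra.algebraMap_eq_smul_one]
    exact Submodule.smul_mem _ _ (Submodule.subset_span (by simp [basisSet]))
  | add x y hx hy => exact add_mem hx hy
  | ι_mul x v hx =>
    rw [ι_eq]
    simp only [add_mul, smul_mul_assoc]
    exact add_mem (add_mem (add_mem (Submodule.smul_mem _ _ (key _ _ hx))
      (Submodule.smul_mem _ _ (key _ _ hx))) (Submodule.smul_mem _ _ (key _ _ hx)))
      (Submodule.smul_mem _ _ (key _ _ hx))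

/-- vector plus bivector in coordinates -/
def vb (u : Fin 4 → ℝ) (w : Fin 6 → ℝ) : CliffordAlgebra Qmink :=
  ι Qmink u + (w 0 • (ee 0 * ee 1) + w 1 • (ee 0 * ee 2) + w 2 • (ee 0 * ee 3)
   + w 3 • (ee 1 * ee 2) + w 4 • (ee 1 * ee 3) + w 5 • (ee 2 * ee 3))

theorem vb_of_anti (α : CliffordAlgebra Qmink) (h : involute (reverse α) = -α) :
    ∃ u w, α = vb u w := by
  have hd : ∀ x : CliffordAlgebra Qmink, ∃ u w, x - involute (reverse x) = vb u w := by
    intro x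
    have hx := mem_span_basis x
    have r : ∀ i, reverse (ee i) = ee i := fun i => by simp [ee]
    have n : ∀ i, involute (ee i) = - ee i := fun i => by simp [ee]
    have s10 := ee_swap 1 0 (by decide)
    have s20 := ee_swap 2 0 (by decide)
    have s30 := ee_swap 3 0 (by decide)
    have s21 := ee_swap 2 1 (by decide)
    have s31 := ee_swap 3 1 (by decide)
    have s32 := ee_swap 3 2 (by decide)
    have t10 := ee_swap' 1 0 (by decide)
    have t20 := ee_swap' 2 0 (by decide)
    have t30 := ee_swap' 3 0 (by decide)
    have t21 := ee_swap' 2 1 (by decide)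
    have t31 := ee_swap' 3 1 (by decide)
    have t32 := ee_swap' 3 2 (by decide)
    induction hx using Submodule.span_induction with
    | mem x h =>
      rcases h with rfl | rfl | rfl | rfl | rfl | rfl | rfl | rfl | rfl | rfl | rfl | rfl | rfl | rfl | rfl | rfl
      on_goal 2 => refine ⟨Pi.single 0 2, 0, ?_⟩
      on_goal 3 => refine ⟨Pi.single 1 2, 0, ?_⟩
      on_goal 4 => refine ⟨Pi.single 2 2, 0, ?_⟩
      on_goal 5 => refine ⟨Pi.single 3 2, 0, ?_⟩
      on_goal 6 => refine ⟨0, Pi.single 0 2, ?_⟩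
      on_goal 7 => refine ⟨0, Pi.single 1 2, ?_⟩
      on_goal 8 => refine ⟨0, Pi.single 2 2, ?_⟩
      on_goal 9 => refine ⟨0, Pi.single 3 2, ?_⟩
      on_goal 10 => refine ⟨0, Pi.single 4 2, ?_⟩
      on_goal 11 => refine ⟨0, Pi.single 5 2, ?_⟩
      on_goal 1 => refine ⟨0, 0, ?_⟩
      on_goal 12 => refine ⟨0, 0, ?_⟩
      on_goal 13 => refine ⟨0, 0, ?_⟩
      on_goal 14 => refine ⟨0, 0, ?_⟩
      on_goal 15 => refine ⟨0, 0, ?_⟩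
      on_goal 16 => refine ⟨0, 0, ?_⟩
      all_goals
        simp [vb, ι_eq, r, n, reverse.map_mul, mul_assoc, s10, s20, s30, s21, s31, s32, t10, t20, t30, t21, t31, t32, two_smul]
    | zero => exact ⟨0, 0, by simp [vb]⟩
    | add x y _ _ hx hy =>
      obtain ⟨u, w, h⟩ := hx
      obtain ⟨u', w', h'⟩ := hy
      refine ⟨u + u', w + w', ?_⟩
      have : vb (u + u') (w + w') = vb u w + vb u' w' := by
        simp only [vb, map_add, Pi.add_apply, add_smul]; abel
      rw [this, ← h, ← h', map_add, map_add]; abel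
    | smul a x _ hx =>
      obtain ⟨u, w, h⟩ := hx
      refine ⟨a • u, a • w, ?_⟩
      have : vb (a • u) (a • w) = a • vb u w := by
        simp only [vb, map_smul, Pi.smul_apply, smul_add, smul_eq_mul, mul_smul]
      rw [this, ← h, map_smul, map_smul, smul_sub]
  obtain ⟨u, w, hx⟩ := hd ((1/2 : ℝ) • α)
  refine ⟨u, w, ?_⟩
  rw [← hx, map_smul, map_smul, h, smul_neg, sub_neg_eq_add, ← add_smul]
  norm_num


theorem cliffToExt_eq (x) :
    cliffToExt x = changeForm (changeForm.associated_neg_proof (Q := Qmink)) x := rfl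

theorem assoc_neg (v : Fin 4 → ℝ) :
    (QuadraticMap.associated (R := ℝ) (-Qmink)) v = - minkB v := by
  have : QuadraticMap.associated (R := ℝ) Qmink = minkB :=
    QuadraticMap.associated_left_inverse ℝ (fun x y => by simp only [minkB_apply]; ring)
  rw [map_neg, this]; rfl

theorem cliffToExt_ι_mul (v : Fin 4 → ℝ) (x : CliffordAlgebra Qmink) :
    cliffToExt (ι Qmink v * x) = ExteriorAlgebra.ι ℝ v * cliffToExt x
      + CliffordAlgebra.contractLeft (minkB v) (cliffToExt x) := by
  have h1 := CliffordAlgebra.changeForm_ι_mul (changeForm.associated_neg_proof (Q := Qmink)) v x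
  have h2 : ∀ y : CliffordAlgebra (0 : QuadraticForm ℝ (Fin 4 → ℝ)),
      CliffordAlgebra.contractLeft (-minkB v) y = - CliffordAlgebra.contractLeft (minkB v) y := by
    intro y; rw [map_neg]; rfl
  rw [assoc_neg, h2, sub_neg_eq_add] at h1
  exact h1

theorem cliffToExt_ι (v : Fin 4 → ℝ) : cliffToExt (ι Qmink v) = ExteriorAlgebra.ι ℝ v := by
  rw [cliffToExt_eq, CliffordAlgebra.changeForm_ι]

theorem cliffToExt_ι_ι (v w : Fin 4 → ℝ) :
    cliffToExt (ι Qmink v * ι Qmink w) =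
      ExteriorAlgebra.ι ℝ v * ExteriorAlgebra.ι ℝ w + algebraMap ℝ _ (minkB v w) := by
  rw [cliffToExt_ι_mul, cliffToExt_ι]
  congr 1
  exact CliffordAlgebra.contractLeft_ι (Q := (0 : QuadraticForm ℝ (Fin 4 → ℝ))) (minkB v) w

theorem symm_pair (u l : Fin 4 → ℝ) (h : minkB u l = 0) :
    cliffToExt.symm
        (ExteriorAlgebra.ι ℝ u + ExteriorAlgebra.ι ℝ u * ExteriorAlgebra.ι ℝ l)
      = CliffordAlgebra.ι Qmink u + ι Qmink u * ι Qmink l := by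
  have h' : cliffToExt (ι Qmink u + ι Qmink u * ι Qmink l) =
      ExteriorAlgebra.ι ℝ u + ExteriorAlgebra.ι ℝ u * ExteriorAlgebra.ι ℝ l := by
    rw [map_add, cliffToExt_ι, cliffToExt_ι_ι, h]; simp
  rw [← h']
  exact cliffToExt.symm_apply_apply _

theorem scalarPart_add (x y) : scalarPart (x + y) = scalarPart x + scalarPart y := by
  simp [scalarPart]

theorem scalarPart_smul (a : ℝ) (x) : scalarPart (a • x) = a * scalarPart x := by
  simp [scalarPart]

theorem algebraMapInv_ι (v : Fin 4 → ℝ) :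
    ExteriorAlgebra.algebraMapInv (ExteriorAlgebra.ι ℝ v) = 0 := by
  simp [ExteriorAlgebra.algebraMapInv]

theorem scalarPart_two (v u : Fin 4 → ℝ) :
    scalarPart (ι Qmink v * ι Qmink u) = minkB v u := by
  rw [scalarPart, cliffToExt_ι_ι]
  simp [algebraMapInv_ι]

theorem scalarPart_three (v a b : Fin 4 → ℝ) :
    scalarPart (ι Qmink v * (ι Qmink a * ι Qmink b)) = 0 := by
  rw [scalarPart, cliffToExt_ι_mul, cliffToExt_ι_ι]
  have : (CliffordAlgebra.contractLeft (minkB v)) (ExteriorAlgebra.ι ℝ a * ExteriorAlgebra.ι ℝ b +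
      (algebraMap ℝ (ExteriorAlgebra ℝ (Fin 4 → ℝ))) (minkB a b)) =
      minkB v a • ExteriorAlgebra.ι ℝ b - ExteriorAlgebra.ι ℝ a * algebraMap ℝ _ (minkB v b) := by
    rw [map_add]
    erw [CliffordAlgebra.contractLeft_ι_mul, CliffordAlgebra.contractLeft_algebraMap,
      CliffordAlgebra.contractLeft_ι]
    rw [add_zero]
  rw [this]
  simp [algebraMapInv_ι]

theorem scalarPart_vb (v u w) : scalarPart (ι Qmink v * vb u w) = minkB v u := by
  simp only [vb, mul_add, mul_smul_comm, scalarPart_add, scalarPart_smul, scalarPart_two, ee,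
    scalarPart_three, mul_zero, add_zero]

theorem polyProj_add (k x y) : polyProj k (x + y) = polyProj k x + polyProj k y := by
  simp [polyProj]

theorem polyProj_smul (k) (a : ℝ) (x) : polyProj k (a • x) = a • polyProj k x := by
  simp [polyProj, DirectSum.decompose_smul]
  rfl

theorem polyProj_one_ι (u) : polyProj 1 (ι Qmink u) = ExteriorAlgebra.ι ℝ u := by
  rw [polyProj, cliffToExt_ι]
  exact DirectSum.decompose_of_mem_same _ (by simp [ExteriorAlgebra.exteriorPower])

theorem polyProj_one_two (u v) (h : minkB u v = 0) : polyProj 1 (ι Qmink u * ι Qmink v) = 0 := by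
  rw [polyProj, cliffToExt_ι_ι, h, map_zero, add_zero]
  refine DirectSum.decompose_of_mem_ne (i := 2) (j := 1) (fun i : ℕ => ⋀[ℝ]^i (Fin 4 → ℝ)) ?_ (by decide)
  unfold ExteriorAlgebra.exteriorPower
  rw [pow_two]
  exact Submodule.mul_mem_mul (by simp) (by simp)

theorem polyProj_vb (u w) : polyProj 1 (vb u w) = ExteriorAlgebra.ι ℝ u := by
  simp only [vb, polyProj_add, polyProj_smul, polyProj_one_ι]
  have h : ∀ i j : Fin 4, i ≠ j → polyProj 1 (ee i * ee j) = 0 := by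
    intro i j hij
    apply polyProj_one_two
    rw [minkB_apply]
    fin_cases i <;> fin_cases j <;> simp at hij ⊢
  simp [h]

theorem ι_mul_ι_vb (u l : Fin 4 → ℝ) (h : minkB u l = 0) :
    ι Qmink u + ι Qmink u * ι Qmink l = vb u ![u 0 * l 1 - u 1 * l 0, u 0 * l 2 - u 2 * l 0,
      u 0 * l 3 - u 3 * l 0, u 1 * l 2 - u 2 * l 1, u 1 * l 3 - u 3 * l 1, u 2 * l 3 - u 3 * l 2] := by
  rw [minkB_apply] at h
  have s10 := ee_swap 1 0 (by decide)
  have s20 := ee_swap 2 0 (by decide)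
  have s30 := ee_swap 3 0 (by decide)
  have s21 := ee_swap 2 1 (by decide)
  have s31 := ee_swap 3 1 (by decide)
  have s32 := ee_swap 3 2 (by decide)
  have q0 := ee_sq 0
  have q1 := ee_sq 1
  have q2 := ee_sq 2
  have q3 := ee_sq 3
  simp at q0 q1 q2 q3
  have h3 : u 3 * l 3 = u 0 * l 0 + u 1 * l 1 + u 2 * l 2 := by linarith
  unfold vb
  congr 1
  rw [ι_eq u, ι_eq l]
  simp only [add_mul, mul_add, smul_mul_assoc, mul_smul_comm, s10, s20, s30, s21, s31, s32,
    q0, q1, q2, q3, smul_smul]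
  match_scalars <;> simp <;> linarith

/-- real gamma matrices -/
def gam (v : Fin 4 → ℝ) : Matrix (Fin 4) (Fin 4) ℝ :=
  !![v 1, 0, v 0, v 2 + v 3;
     0, v 1, v 3 - v 2, v 0;
     v 0, -v 2 - v 3, -v 1, 0;
     v 2 - v 3, v 0, 0, -v 1]

def gamL : (Fin 4 → ℝ) →ₗ[ℝ] Matrix (Fin 4) (Fin 4) ℝ where
  toFun := gam
  map_add' x y := by
    ext i j; fin_cases i <;> fin_cases j <;> simp [gam] <;> ring
  map_smul' a x := by
    ext i j; fin_cases i <;> fin_cases j <;> simp [gam] <;> ring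

def rho : CliffordAlgebra Qmink →ₐ[ℝ] Matrix (Fin 4) (Fin 4) ℝ :=
  CliffordAlgebra.lift Qmink ⟨gamL, by
    intro v
    rw [Qmink_apply, minkB_apply]
    ext i j
    fin_cases i <;> fin_cases j <;>
      simp [gamL, gam, Matrix.mul_apply, Fin.sum_univ_four, Matrix.algebraMap_matrix_apply] <;> ring⟩

theorem rho_ι (v) : rho (ι Qmink v) = gam v := by
  simp [rho, gamL]

theorem backward (u l : Fin 4 → ℝ) (huu : minkB u u = 0) (hll : minkB l l = 1)
    (hul : minkB u l = 0) (v : Fin 4 → ℝ) :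
    (ι Qmink u + ι Qmink u * ι Qmink l) * ι Qmink v * (ι Qmink u + ι Qmink u * ι Qmink l)
      = (4 * minkB v u) • (ι Qmink u + ι Qmink u * ι Qmink l) := by
  have h1 : ι Qmink u * ι Qmink u = 0 := by rw [ι_sq_scalar, Qmink_apply, huu, map_zero]
  have h2 : ι Qmink l * ι Qmink l = 1 := by rw [ι_sq_scalar, Qmink_apply, hll, map_one]
  have h3 : ι Qmink l * ι Qmink u = - (ι Qmink u * ι Qmink l) := by
    rw [mul_swap u l, hul]; simp
  have h4 : ι Qmink v * ι Qmink u = (2 * minkB v u) • 1 - ι Qmink u * ι Qmink v := by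
    rw [mul_swap, Algebra.algebraMap_eq_smul_one]
  have h1' : ∀ x, ι Qmink u * (ι Qmink u * x) = 0 := fun x => by rw [← mul_assoc, h1, zero_mul]
  have h2' : ∀ x, ι Qmink l * (ι Qmink l * x) = x := fun x => by rw [← mul_assoc, h2, one_mul]
  have h3' : ∀ x, ι Qmink l * (ι Qmink u * x) = - (ι Qmink u * (ι Qmink l * x)) := fun x => by
    rw [← mul_assoc, h3, neg_mul, mul_assoc]
  have h4' : ∀ x, ι Qmink v * (ι Qmink u * x) =
      (2 * minkB v u) • x - ι Qmink u * (ι Qmink v * x) := fun x => by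
    rw [← mul_assoc, h4, sub_mul, smul_mul_assoc, one_mul, mul_assoc]
  simp only [mul_add, add_mul, mul_assoc, h1, h2, h3, h4, h1', h2', h3', h4', mul_sub, mul_smul_comm,
    mul_one, mul_neg, mul_zero, neg_zero, sub_zero]
  module

theorem backward_sq (u l : Fin 4 → ℝ) (huu : minkB u u = 0) (hul : minkB u l = 0) :
    (ι Qmink u + ι Qmink u * ι Qmink l) * (ι Qmink u + ι Qmink u * ι Qmink l) = 0 := by
  have h1 : ι Qmink u * ι Qmink u = 0 := by rw [ι_sq_scalar, Qmink_apply, huu, map_zero]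
  have h3 : ι Qmink l * ι Qmink u = - (ι Qmink u * ι Qmink l) := by
    rw [mul_swap u l, hul]; simp
  have h1' : ∀ x, ι Qmink u * (ι Qmink u * x) = 0 := fun x => by rw [← mul_assoc, h1, zero_mul]
  have h3' : ∀ x, ι Qmink l * (ι Qmink u * x) = - (ι Qmink u * (ι Qmink l * x)) := fun x => by
    rw [← mul_assoc, h3, neg_mul, mul_assoc]
  simp [mul_add, add_mul, mul_assoc, h1, h3, h1', h3']

/-- the matrix of a vector plus bivector -/
theorem rho_vb (u w) : rho (vb u w) = gam u +
   !![-w 5, -w 1 - w 2, -w 0, w 3 + w 4;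
      w 1 - w 2, w 5, -w 3 + w 4, -w 0;
      w 0, w 3 + w 4, -w 5, w 1 + w 2;
      -w 3 + w 4, w 0, -w 1 + w 2, w 5] := by
  simp only [vb, map_add, map_smul, map_mul, ee, rho_ι]
  congr 1
  ext i j
  fin_cases i <;> fin_cases j <;>
    simp [gam, Matrix.mul_apply, Fin.sum_univ_four] <;> ring

theorem three_sq (a b c : ℝ) (h : a * a + b * b + c * c = 0) : a = 0 ∧ b = 0 ∧ c = 0 := by
  have ha := mul_self_nonneg a
  have hb := mul_self_nonneg b
  have hc := mul_self_nonneg c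
  refine ⟨mul_self_eq_zero.1 ?_, mul_self_eq_zero.1 ?_, mul_self_eq_zero.1 ?_⟩ <;> linarith

set_option maxHeartbeats 4000000 in
theorem coords (u w) (hsq : vb u w * vb u w = 0)
    (h3 : vb u w * ee 3 * vb u w = (-4 * u 3) • vb u w) :
    (u 0 * w 3 - u 1 * w 1 + u 2 * w 0 = 0 ∧ u 0 * w 4 - u 1 * w 2 + u 3 * w 0 = 0 ∧
     u 0 * w 5 - u 2 * w 2 + u 3 * w 1 = 0 ∧ u 1 * w 5 - u 2 * w 4 + u 3 * w 3 = 0) ∧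
    u 0 ^ 2 + u 1 ^ 2 + u 2 ^ 2 - u 3 ^ 2 - w 0 ^ 2 - w 1 ^ 2 - w 3 ^ 2
      + w 2 ^ 2 + w 4 ^ 2 + w 5 ^ 2 = 0 ∧
    u 0 ^ 2 + u 1 ^ 2 + u 2 ^ 2 + u 3 ^ 2 + w 0 ^ 2 + w 1 ^ 2 + w 3 ^ 2
      + w 2 ^ 2 + w 4 ^ 2 + w 5 ^ 2 = 4 * u 3 ^ 2 ∧
    u 3 * (u 0 * w 2 + u 1 * w 4 + u 2 * w 5) = 0 := by
  have A := congrArg rho hsq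
  have B := congrArg rho h3
  rw [map_mul, map_zero, rho_vb] at A
  rw [map_mul, map_mul, map_smul, ee, rho_ι, rho_vb] at B
  have A' : ∀ i j, _ := fun i j => congrFun (congrFun A i) j
  have B' : ∀ i j, _ := fun i j => congrFun (congrFun B i) j
  simp [Fin.forall_fin_succ, gam, Matrix.mul_apply, Fin.sum_univ_four] at A' B'
  obtain ⟨⟨a00, a01, a02, a03⟩, ⟨a10, a11, a12, a13⟩, ⟨a20, a21, a22, a23⟩, a30, a31, a32, a33⟩ := A'
  obtain ⟨⟨b00, b01, b02, b03⟩, ⟨b10, b11, b12, b13⟩, ⟨b20, b21, b22, b23⟩, b30, b31, b32, b33⟩ := B'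
  clear A B hsq h3
  ring_nf at a00 a01 a02 a03 a10 a11 a12 a13 a20 a21 a22 a23 a30 a31 a32 a33
  ring_nf at b00 b01 b02 b03 b10 b11 b12 b13 b20 b21 b22 b23 b30 b31 b32 b33
  refine ⟨⟨?_, ?_, ?_, ?_⟩, ?_, ?_, ?_⟩
  · linarith
  · linarith
  · linarith
  · linarith
  · linarith
  · linarith
  · have c0 : u 3 * u 0 = -(w 0 * w 4 + w 1 * w 5) := by linarith
    have c1 : u 3 * u 1 = -(-w 0 * w 2 + w 3 * w 5) := by linarith
    have c2 : u 3 * u 2 = -(-w 1 * w 2 - w 3 * w 4) := by linarith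
    linear_combination w 2 * c0 + w 4 * c1 + w 5 * c2

/-- a polyform `α` on Minkowski 4-space satisfies `(π∘τ)(α) = -α`,
`α ⋄ α = 0`, `α ⋄ u ⋄ α = 0` for `u = α⁽¹⁾`, and `α ⋄ v ⋄ α = 4 (v ⋄ α)⁽⁰⁾ α`
for every one-form `v`, iff `α = u + u ∧ l` for a parabolic pair `(u,l)` or `α = 0`. -/
theorem stmt_14 (α : CliffordAlgebra Qmink) :
    (CliffordAlgebra.involute (CliffordAlgebra.reverse α) = -α ∧
        α * α = 0 ∧
        (∃ u : Fin 4 → ℝ, polyProj 1 α = ExteriorAlgebra.ι ℝ u ∧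
          α * CliffordAlgebra.ι Qmink u * α = 0) ∧
        ∀ v : Fin 4 → ℝ,
          α * CliffordAlgebra.ι Qmink v * α =
            (4 * scalarPart (CliffordAlgebra.ι Qmink v * α)) • α) ↔
      (α = 0 ∨ ∃ u l : Fin 4 → ℝ, u ≠ 0 ∧ minkB u u = 0 ∧ minkB l l = 1 ∧
        minkB u l = 0 ∧
        α = cliffToExt.symm
          (ExteriorAlgebra.ι ℝ u + ExteriorAlgebra.ι ℝ u * ExteriorAlgebra.ι ℝ l)) := by
  constructor
  · rintro ⟨h1, h2, ⟨u', hu', h3⟩, h4⟩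
    obtain ⟨u, w, rfl⟩ := vb_of_anti α h1
    have hu : u' = u := by
      rw [polyProj_vb] at hu'
      exact (ExteriorAlgebra.ι_leftInverse (R := ℝ) (M := Fin 4 → ℝ)).injective hu'.symm
    subst hu
    by_cases h0 : vb u' w = 0
    · exact Or.inl h0
    right
    have hn : minkB u' u' = 0 := by
      have := h4 u'
      rw [h3, scalarPart_vb] at this
      rcases smul_eq_zero.1 this.symm with h | h
      · linarith
      · exact absurd h h0
    have h5 := h4 (Pi.single 3 1)
    rw [scalarPart_vb] at h5
    obtain ⟨⟨e1, e2, e3, e4⟩, e5, e6, e7⟩ := coords u' w h2 (by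
      rw [ee, h5]; congr 1; simp [minkB_apply])
    have hn' := hn
    rw [minkB_apply] at hn'
    have hu3 : u' 3 ≠ 0 := by
      intro hz
      rw [hz] at hn' e6
      obtain ⟨z0, z1, z2⟩ := three_sq (u' 0) (u' 1) (u' 2) (by linarith)
      rw [z0, z1, z2] at e6
      have p : 0 ≤ w 0 ^ 2 + w 1 ^ 2 + w 3 ^ 2 := by positivity
      have p' : 0 ≤ w 2 ^ 2 + w 4 ^ 2 + w 5 ^ 2 := by positivity
      obtain ⟨w0, w1, w3⟩ := three_sq (w 0) (w 1) (w 3) (by linarith)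
      obtain ⟨w2, w4, w5⟩ := three_sq (w 2) (w 4) (w 5) (by linarith)
      apply h0
      simp [vb, ι_eq, z0, z1, z2, hz, w0, w1, w2, w3, w4, w5]
    have e8 := (mul_eq_zero.1 e7).resolve_left hu3
    have hul : minkB u' ![-w 2 / u' 3, -w 4 / u' 3, -w 5 / u' 3, 0] = 0 := by
      simp [minkB_apply]
      field_simp
      linarith
    refine ⟨u', ![-w 2 / u' 3, -w 4 / u' 3, -w 5 / u' 3, 0], ?_, hn, ?_, hul, ?_⟩
    · rintro rfl; exact hu3 rfl
    · simp [minkB_apply]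
      field_simp
      linarith
    · rw [symm_pair _ _ hul, ι_mul_ι_vb _ _ hul]
      congr 1
      ext i
      fin_cases i <;> simp <;> field_simp <;> linarith
  · rintro (rfl | ⟨u, l, -, huu, hll, hul, rfl⟩)
    · refine ⟨by simp, by simp, ⟨0, by simp [polyProj], by simp⟩, by simp⟩
    · rw [symm_pair _ _ hul]
      have hs : ∀ v, scalarPart (ι Qmink v * (ι Qmink u + ι Qmink u * ι Qmink l)) = minkB v u := by
        intro v
        rw [ι_mul_ι_vb _ _ hul, scalarPart_vb]
      refine ⟨?_, backward_sq u l huu hul, ⟨u, ?_, ?_⟩, ?_⟩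
      · have h3 : ι Qmink l * ι Qmink u = - (ι Qmink u * ι Qmink l) := by
          rw [mul_swap u l, hul]; simp
        simp [reverse.map_mul, h3]; abel
      · rw [ι_mul_ι_vb _ _ hul, polyProj_vb]
      · rw [backward u l huu hll hul, huu]; simp
      · intro v
        rw [hs, backward u l huu hll hul]

end
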